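/- Let (V, V_∃, E, q_0, Ω) be a min-parity game with priorities contained in [0, |V|], and let n be the smallest even integer with n ≥ |V|. Construct the interval mean-payoff game (V', V'_∃, E', w, q_0, I) as follows: I = [0,1) ∪ [2,3) ∪ ⋯ ∪ [n, n+1); V' = V ∪ (V × {0, +, −}), writing (v,∗) as v^∗; V'_∃ = V_∃ ∪ {v^0, v^+, v^− : Ω(v) is even}; for each edge (v, u) ∈ E there is an edge (v, u^0) ∈ E' with weight Ω(v); for each v ∈ V with p = Ω(v) there are edges (v^0, v^+), (v^0, v^−), (v^+, v), (v^−, v) in E' all of weight p, a self-loop (v^+, v^+) of weight p + 1, and a self-loop (v^−, v^−) of weight p − 1. Then Eve has a winning strategy in the parity game if and only if Eve has a winning strategy in the interval mean-payoff game (i.e., a strategy ensuring MP(π) ∈ I for every consistent play π). -/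

import Mathlib

/-!
Inside the gadget of a vertex `v` of priority `p`, the owner can *balance*: the self-loops change
the integer excess (total weight minus `p` times the number of steps) by `+1` or `-1`, and all
other gadget edges leave it unchanged, so after finitely many loops the excess is exactly `0` and
the owner proceeds to `v` (`balance`, `balanced_exit`, `not_loop_of_balanced`).

Let `p` be the least priority seen infinitely often in the parity play traced by a play `π` of the
gadget game, and suppose all gadgets of priority `p` are balanced in `π`. From some time on every
weight outside the priority-`p` gadgets is at least `p`, apart from self-loops of weight `q - 1`
with `q > p`, which are again at least `p`. Hence the excess over `p` is eventually nonnegative and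
infinitely often `0`, and the liminf mean-payoff is exactly `p` (`MP_of_balanced`). A play that
never leaves some gadget of priority `p` has mean-payoff `p ± 1`, of the parity opposite to `p`
(`eventually_loop`, `MP_of_loop`). An integer between `0` and `n` is in `I` iff it is even.

If Eve wins the parity game, she plays her strategy on the original vertices and balances in the
gadgets she owns (`liftStrategy`). Either Adam stays in a gadget of odd priority, and the value is
even, or the least recurring priority `p` is even, its gadgets are balanced, and the value is `p`.

If Eve wins the gadget game with `τ`, she plays the parity game by simulating the gadget game
against an Adam who balances in his gadgets (`sim`, `projStrategy`). As `τ` wins, the simulation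
never stays in a gadget; were the least recurring priority `p` odd, the simulated value would be
`p`, which is not in `I`. So no determinacy result is needed.
-/

open Filter

/-- A game graph: vertex set `V`, Eve's vertices `Eve`, edge relation `E` (every vertex
has a successor), integer weight function `w`, and initial vertex `init`. -/
structure GameGraph (V : Type) where
  Eve : Set V
  E : V → V → Prop
  w : V → V → ℤ
  init : V
  succ : ∀ v, ∃ u, E v u

namespace GameGraph

variable {V : Type}

/-- `π` is a play starting at vertex `v`. -/
def IsPlayFrom (G : GameGraph V) (v : V) (π : ℕ → V) : Prop :=
  π 0 = v ∧ ∀ i, G.E (π i) (π (i + 1))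

/-- `π` is a play (from the initial vertex). -/
def IsPlay (G : GameGraph V) (π : ℕ → V) : Prop :=
  G.IsPlayFrom G.init π

/-- The prefix `π 0, …, π i` of a play, as a list. -/
def prefixList (π : ℕ → V) (i : ℕ) : List V :=
  List.ofFn (fun j : Fin (i + 1) => π j)

/-- A (history-based) strategy for Eve is legal if it always proposes a successor
of the current (Eve) vertex. -/
def EveLegal (G : GameGraph V) (σ : List V → V) : Prop :=
  ∀ (l : List V) (v : V), v ∈ G.Eve → G.E v (σ (l ++ [v]))

/-- A (history-based) strategy for Adam is legal if it always proposes a successor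
of the current (Adam) vertex. -/
def AdamLegal (G : GameGraph V) (σ : List V → V) : Prop :=
  ∀ (l : List V) (v : V), v ∉ G.Eve → G.E v (σ (l ++ [v]))

/-- The play `π` is consistent with Eve's strategy `σ`. -/
def ConsEve (G : GameGraph V) (σ : List V → V) (π : ℕ → V) : Prop :=
  ∀ i, π i ∈ G.Eve → π (i + 1) = σ (prefixList π i)

/-- The play `π` is consistent with Adam's strategy `σ`. -/
def ConsAdam (G : GameGraph V) (σ : List V → V) (π : ℕ → V) : Prop :=
  ∀ i, π i ∉ G.Eve → π (i + 1) = σ (prefixList π i)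

/-- Eve has a winning strategy for the objective `Win`. -/
def EveWins (G : GameGraph V) (Win : (ℕ → V) → Prop) : Prop :=
  ∃ σ : List V → V, G.EveLegal σ ∧ ∀ π, G.IsPlay π → G.ConsEve σ π → Win π

/-- Adam has a winning strategy: he can ensure the objective `Win` of Eve fails. -/
def AdamWins (G : GameGraph V) (Win : (ℕ → V) → Prop) : Prop :=
  ∃ σ : List V → V, G.AdamLegal σ ∧ ∀ π, G.IsPlay π → G.ConsAdam σ π → ¬ Win π

/-- Consistency with a positional Eve strategy. -/
def ConsEvePos (G : GameGraph V) (f : V → V) (π : ℕ → V) : Prop :=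
  ∀ i, π i ∈ G.Eve → π (i + 1) = f (π i)

/-- Consistency with a positional Adam strategy. -/
def ConsAdamPos (G : GameGraph V) (f : V → V) (π : ℕ → V) : Prop :=
  ∀ i, π i ∉ G.Eve → π (i + 1) = f (π i)

/-- Eve has a positional (memoryless) winning strategy. -/
def EveWinsPos (G : GameGraph V) (Win : (ℕ → V) → Prop) : Prop :=
  ∃ f : V → V, (∀ v ∈ G.Eve, G.E v (f v)) ∧
    ∀ π, G.IsPlay π → G.ConsEvePos f π → Win π

/-- Adam has a positional (memoryless) winning strategy. -/
def AdamWinsPos (G : GameGraph V) (Win : (ℕ → V) → Prop) : Prop :=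
  ∃ f : V → V, (∀ v, v ∉ G.Eve → G.E v (f v)) ∧
    ∀ π, G.IsPlay π → G.ConsAdamPos f π → ¬ Win π

/-- The run of the memory structure `(δ, m)` of a finite-state machine while
reading the play `π`: after `i` steps it has read `π 0, …, π (i-1)`. -/
def memRun {M : Type} (δ : M → V → M) (m : M) (π : ℕ → V) : ℕ → M
  | 0 => m
  | i + 1 => δ (memRun δ m π i) (π i)

/-- Consistency of a play with the finite-memory strategy given by the machine
`(m0, δ, o)`: at step `i`, the machine has memory `memRun δ m0 π i` (having read
`π 0, …, π (i-1)`) and outputs the move `o (memRun δ m0 π i) (π i)`. -/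
def ConsEveFM (G : GameGraph V) {M : Type} (m0 : M) (δ : M → V → M)
    (o : M → V → V) (π : ℕ → V) : Prop :=
  ∀ i, π i ∈ G.Eve → π (i + 1) = o (memRun δ m0 π i) (π i)

/-- Eve has a finite-memory winning strategy, i.e. one computed by a
finite-state machine. -/
def EveWinsFM (G : GameGraph V) (Win : (ℕ → V) → Prop) : Prop :=
  ∃ (M : Type) (_ : Fintype M) (m0 : M) (δ : M → V → M) (o : M → V → V),
    (∀ m, ∀ v ∈ G.Eve, G.E v (o m v)) ∧
    ∀ π, G.IsPlay π → G.ConsEveFM m0 δ o π → Win π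

/-- The total weight `w(π[..k])` of the length-`k` prefix of a play. -/
def partialSum (G : GameGraph V) (π : ℕ → V) (k : ℕ) : ℤ :=
  ∑ i ∈ Finset.range k, G.w (π i) (π (i + 1))

/-- The (liminf) mean-payoff of a play. -/
noncomputable def MP (G : GameGraph V) (π : ℕ → V) : ℝ :=
  liminf (fun k => (G.partialSum π k : ℝ) / (k : ℝ)) atTop

/-- The liminf payoff of a play, in the extended reals. -/
noncomputable def liminfPayoff (G : GameGraph V) (π : ℕ → V) : EReal :=
  liminf (fun i => ((G.w (π i) (π (i + 1)) : ℝ) : EReal)) atTop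

/-- The total-sum payoff of a play, in the extended reals. -/
noncomputable def totalPayoff (G : GameGraph V) (π : ℕ → V) : EReal :=
  liminf (fun k => ((G.partialSum π k : ℝ) : EReal)) atTop

/-- The discounted sum of a play, with discount factor `lam`. -/
noncomputable def DS (G : GameGraph V) (lam : ℝ) (π : ℕ → V) : ℝ :=
  ∑' i : ℕ, lam ^ i * (G.w (π i) (π (i + 1)) : ℝ)

/-- A play of a (min-)parity game is winning for Eve iff the minimal priority
occurring infinitely often is even. -/
def ParityWin (Ω : V → ℕ) (π : ℕ → V) : Prop :=
  ∃ p, Even p ∧ (∀ N, ∃ k, N ≤ k ∧ Ω (π k) = p) ∧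
    ∀ q, (∀ N, ∃ k, N ≤ k ∧ Ω (π k) = q) → p ≤ q

end GameGraph
/-- The interval mean-payoff game obtained from a parity game `(G, Ω)` by replacing
every vertex `v` by the gadget of Figure 3: the tag `0 : Fin 3` stands for `v⁰`, the
tag `1` for `v⁺` and the tag `2` for `v⁻`. Every edge `(v, u)` of `G` becomes an edge
`(v, u⁰)` of weight `Ω v`; the gadget edges `(v⁰, v⁺), (v⁰, v⁻), (v⁺, v), (v⁻, v)`
have weight `Ω v`, the self-loop on `v⁺` has weight `Ω v + 1` and the self-loop on
`v⁻` has weight `Ω v − 1`. The gadget vertices `v⁰, v⁺, v⁻` belong to Eve iff `Ω v`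
is even. -/
def mpOfParity {V : Type} (G : GameGraph V) (Ω : V → ℕ) :
    GameGraph (V ⊕ V × Fin 3) where
  Eve := Sum.inl '' G.Eve ∪ Sum.inr '' {p : V × Fin 3 | Even (Ω p.1)}
  E x y :=
    match x, y with
    | Sum.inl v, Sum.inr (u, t) => G.E v u ∧ t = 0
    | Sum.inr (v, t), Sum.inr (u, s) =>
        v = u ∧ ((t = 0 ∧ (s = 1 ∨ s = 2)) ∨ (t = 1 ∧ s = 1) ∨ (t = 2 ∧ s = 2))
    | Sum.inr (v, t), Sum.inl u => v = u ∧ (t = 1 ∨ t = 2)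
    | Sum.inl _, Sum.inl _ => False
  w x y :=
    match x, y with
    | Sum.inl v, _ => (Ω v : ℤ)
    | Sum.inr (v, t), Sum.inr (_, s) =>
        if t = s then (if t = 1 then (Ω v : ℤ) + 1 else (Ω v : ℤ) - 1) else (Ω v : ℤ)
    | Sum.inr (v, _), Sum.inl _ => (Ω v : ℤ)
  init := Sum.inl G.init
  succ := by
    rintro (v | ⟨v, t⟩)
    · obtain ⟨u, hu⟩ := G.succ v
      exact ⟨Sum.inr (u, 0), hu, rfl⟩
    · fin_cases t
      · exact ⟨Sum.inr (v, 1), rfl, Or.inl ⟨rfl, Or.inl rfl⟩⟩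
      · exact ⟨Sum.inr (v, 1), rfl, Or.inr (Or.inl ⟨rfl, rfl⟩)⟩
      · exact ⟨Sum.inr (v, 2), rfl, Or.inr (Or.inr ⟨rfl, rfl⟩)⟩

/-! ### Balancing and traces -/

open GameGraph

section Reduction

variable {V : Type}

/-- The vertex of the parity game underlying a vertex of the gadget game. -/
def gBase (x : V ⊕ V × Fin 3) : V := Sum.elim id Prod.fst x

/-- The number of original vertices (as opposed to gadget vertices) strictly before time `i`. -/
def gCount (π : ℕ → V ⊕ V × Fin 3) (i : ℕ) : ℕ := Nat.count (fun j => (π j).isLeft = true) i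

/-- The excess of the first `k` steps over the target mean `p`: total weight minus `p * k`. -/
def excess (G : GameGraph V) (Ω : V → ℕ) (π : ℕ → V ⊕ V × Fin 3) (p k : ℕ) : ℤ :=
  (mpOfParity G Ω).partialSum π k - (p : ℤ) * k

/-- The excess computed from a history list; out-of-range entries are irrelevant. -/
def listExcess (G : GameGraph V) (Ω : V → ℕ) (h : List (V ⊕ V × Fin 3)) (p : ℕ) : ℤ :=
  excess G Ω (fun j => h.getD j (Sum.inl G.init)) p (h.length - 1)

/-- The balancing move inside the gadget of `v` when the excess over `Ω v` is `D`: choose the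
side whose loop moves `D` towards zero, loop until `D = 0`, and then leave for `v`. -/
def balance (D : ℤ) (v : V) (t : Fin 3) : V ⊕ V × Fin 3 :=
  if t = 0 then (if 0 < D then Sum.inr (v, 2) else Sum.inr (v, 1))
  else if t = 1 then (if D < 0 then Sum.inr (v, 1) else Sum.inl v)
  else (if 0 < D then Sum.inr (v, 2) else Sum.inl v)

/-- In `π`, every move inside a gadget of priority `p` is the balancing move. -/
def PlayBalanced (G : GameGraph V) (Ω : V → ℕ) (π : ℕ → V ⊕ V × Fin 3) (p : ℕ) : Prop :=
  ∀ i v t, Ω v = p → π i = Sum.inr (v, t) → π (i + 1) = balance (excess G Ω π p i) v t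

/-- `ρ` is the play of the parity game traced by `π`: at each time the underlying vertex of `π`
is the entry of `ρ` indexed by the number of original vertices already left behind. -/
def Traces (π : ℕ → V ⊕ V × Fin 3) (ρ : ℕ → V) : Prop :=
  ∀ i, gBase (π i) = ρ (gCount π i)

/-! ### Edges and histories -/

section Basic

variable {G : GameGraph V} {Ω : V → ℕ} {π : ℕ → V ⊕ V × Fin 3} {ρ : ℕ → V}

lemma edge_inl {v : V} {y} (h : (mpOfParity G Ω).E (Sum.inl v) y) :
    ∃ u, G.E v u ∧ y = Sum.inr (u, 0) := by
  rcases y with y | ⟨u, t⟩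
  · exact h.elim
  · exact ⟨u, h.1, by rw [h.2]⟩

lemma edge_zero {v : V} {y} (h : (mpOfParity G Ω).E (Sum.inr (v, 0)) y) :
    y = Sum.inr (v, 1) ∨ y = Sum.inr (v, 2) := by
  rcases y with y | ⟨u, t⟩
  · have := h.2; simp at this
  · obtain ⟨rfl, h⟩ := h
    simpa using h

lemma edge_one {v : V} {y} (h : (mpOfParity G Ω).E (Sum.inr (v, 1)) y) :
    y = Sum.inr (v, 1) ∨ y = Sum.inl v := by
  rcases y with y | ⟨u, t⟩
  · obtain ⟨rfl, h⟩ := h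
    simp
  · obtain ⟨rfl, h⟩ := h
    simpa using h

lemma edge_two {v : V} {y} (h : (mpOfParity G Ω).E (Sum.inr (v, 2)) y) :
    y = Sum.inr (v, 2) ∨ y = Sum.inl v := by
  rcases y with y | ⟨u, t⟩
  · obtain ⟨rfl, h⟩ := h
    simp
  · obtain ⟨rfl, h⟩ := h
    simpa using h

lemma edge_inr_base {v : V} {t : Fin 3} {y} (h : (mpOfParity G Ω).E (Sum.inr (v, t)) y) :
    gBase y = v := by
  rcases y with y | ⟨u, s⟩
  · exact h.1.symm
  · exact h.1.symm

lemma balance_edge (D : ℤ) (v : V) (t : Fin 3) :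
    (mpOfParity G Ω).E (Sum.inr (v, t)) (balance D v t) := by
  fin_cases t <;> simp only [balance] <;> split_ifs <;> simp_all [mpOfParity]

lemma inl_mem_eve {v : V} : Sum.inl v ∈ (mpOfParity G Ω).Eve ↔ v ∈ G.Eve := by
  simp [mpOfParity]

lemma inr_mem_eve {v : V} {t : Fin 3} :
    Sum.inr (v, t) ∈ (mpOfParity G Ω).Eve ↔ Even (Ω v) := by
  simp [mpOfParity]

lemma prefixList_succ {α : Type} (π : ℕ → α) (i : ℕ) :
    prefixList π (i + 1) = prefixList π i ++ [π (i + 1)] := by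
  simp only [prefixList]
  rw [List.ofFn_succ_last]
  simp

lemma prefixList_eq {α : Type} (π : ℕ → α) (i : ℕ) :
    prefixList π i = (List.range (i + 1)).map π := by
  induction i with
  | zero => simp [prefixList]
  | succ i ih => rw [prefixList_succ, ih, List.range_succ (n := i + 1)]; simp

lemma prefixList_concat {α : Type} (π : ℕ → α) (i : ℕ) :
    ∃ l, prefixList π i = l ++ [π i] := by
  rw [prefixList_eq, List.range_succ]
  exact ⟨(List.range i).map π, by simp⟩

lemma prefixList_getD {α : Type} (π : ℕ → α) (i j : ℕ) (a : α) (h : j ≤ i) :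
    (prefixList π i).getD j a = π j := by
  rw [prefixList_eq]
  simp [List.getD, List.getElem?_range (show j < i + 1 by omega)]

lemma listExcess_prefix (i p : ℕ) :
    listExcess G Ω (prefixList π i) p = excess G Ω π p i := by
  have hl : (prefixList π i).length - 1 = i := by simp [prefixList]
  rw [listExcess, hl, excess, excess, partialSum, partialSum]
  congr 1
  apply Finset.sum_congr rfl
  intro j hj
  have := Finset.mem_range.1 hj
  rw [prefixList_getD _ _ _ _ (by omega), prefixList_getD _ _ _ _ (by omega)]

lemma excess_succ (p i : ℕ) : excess G Ω π p (i + 1) =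
    excess G Ω π p i + (mpOfParity G Ω).w (π i) (π (i + 1)) - p := by
  simp only [excess, partialSum, Finset.sum_range_succ]
  push_cast
  ring

lemma gCount_succ_inl {i : ℕ} {v : V} (h : π i = Sum.inl v) :
    gCount π (i + 1) = gCount π i + 1 := by
  simp [gCount, Nat.count_succ, h]

lemma gCount_succ_inr {i : ℕ} {x} (h : π i = Sum.inr x) :
    gCount π (i + 1) = gCount π i := by
  simp [gCount, Nat.count_succ, h]

/-! ### Computing mean-payoffs -/

lemma MP_of_const {N : ℕ} {c : ℤ}
    (h : ∀ i ≥ N, (mpOfParity G Ω).w (π i) (π (i + 1)) = c) :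
    (mpOfParity G Ω).MP π = c := by
  set S := (mpOfParity G Ω).partialSum π
  have key : ∀ i ≥ N, S i = c * i + (S N - c * N) := by
    intro i hi
    induction i, hi using Nat.le_induction with
    | base => ring
    | succ i hi ih =>
      have : S (i + 1) = S i + (mpOfParity G Ω).w (π i) (π (i + 1)) := by
        simp only [S, partialSum, Finset.sum_range_succ]
      rw [this, ih, h i hi]; push_cast; ring
  apply Filter.Tendsto.liminf_eq
  have h1 := (tendsto_const_div_atTop_nhds_zero_nat ((S N - c * N : ℤ) : ℝ)).const_add (c : ℝ)
  rw [add_zero] at h1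
  refine h1.congr' ?_
  filter_upwards [eventually_ge_atTop N, eventually_gt_atTop 0] with i hi hi0
  have : (i : ℝ) ≠ 0 := by positivity
  change _ = (S i : ℝ) / i
  rw [key i hi]
  push_cast
  field_simp

lemma MP_of_excess {N p : ℕ} (h : ∀ i ≥ N, 0 ≤ excess G Ω π p i)
    (h0 : ∀ M, ∃ i ≥ M, excess G Ω π p i = 0) :
    (mpOfParity G Ω).MP π = p := by
  have hlow : ∀ᶠ k : ℕ in atTop,
      (p : ℝ) ≤ ((mpOfParity G Ω).partialSum π k : ℝ) / (k : ℝ) := by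
    filter_upwards [eventually_ge_atTop N, eventually_gt_atTop 0] with i hi hi0
    rw [le_div_iff₀ (by positivity)]
    have := h i hi
    rw [excess, sub_nonneg] at this
    exact_mod_cast this
  have hfreq : ∃ᶠ k : ℕ in atTop,
      ((mpOfParity G Ω).partialSum π k : ℝ) / (k : ℝ) ≤ p := by
    rw [frequently_atTop]
    intro M
    obtain ⟨i, hi, h⟩ := h0 (M + 1)
    refine ⟨i, by omega, ?_⟩
    have hi0 : (0 : ℝ) < i := by exact_mod_cast (show 0 < i by omega)
    rw [div_le_iff₀ hi0]
    rw [excess, sub_eq_zero] at h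
    rw [h]; push_cast; exact le_rfl
  apply le_antisymm
  · exact liminf_le_of_frequently_le hfreq ⟨_, hlow⟩
  · exact le_liminf_of_le (IsCobounded.of_frequently_le hfreq) hlow

/-- If `π` balances at every gadget of priority `p`, the excess over `p` has a definite sign on
the two sides of these gadgets. -/
lemma balanced_sign (hπ : (mpOfParity G Ω).IsPlay π) {p : ℕ} (hb : PlayBalanced G Ω π p)
    (i : ℕ) (v : V) (hv : Ω v = p) :
    (π i = Sum.inr (v, 1) → excess G Ω π p i ≤ 0) ∧
      (π i = Sum.inr (v, 2) → 0 ≤ excess G Ω π p i) := by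
  induction i with
  | zero =>
    have h0 : π 0 = Sum.inl G.init := hπ.1
    simp [h0]
  | succ i ih =>
    have he := hπ.2 i
    have hs := excess_succ (G := G) (Ω := Ω) (π := π) p i
    rcases hx : π i with u | ⟨u, t⟩
    · rw [hx] at he
      obtain ⟨y, -, hy⟩ := edge_inl he
      simp [hy]
    · have hbase : gBase (π (i + 1)) = u := by rw [hx] at he; exact edge_inr_base he
      by_cases huv : u = v
      · subst huv
        have hm := hb i u t hv hx
        rw [hm, hx] at hs
        rw [hm]
        rw [hx] at ih
        fin_cases t <;> simp only [balance] at hs ⊢ <;> split_ifs at hs ⊢ <;>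
          simp_all [mpOfParity] <;> omega
      · constructor <;> intro h <;> rw [h] at hbase <;> exact absurd hbase.symm huv

/-- A balanced gadget is left with excess exactly zero. -/
lemma balanced_exit (hπ : (mpOfParity G Ω).IsPlay π) {p : ℕ} (hb : PlayBalanced G Ω π p)
    (i : ℕ) (hi : 0 < i) (v : V) (hv : Ω v = p) (hx : π i = Sum.inl v) :
    excess G Ω π p i = 0 := by
  obtain ⟨i, rfl⟩ : ∃ j, i = j + 1 := ⟨i - 1, by omega⟩
  have he := hπ.2 i
  have hs := excess_succ (G := G) (Ω := Ω) (π := π) p i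
  rcases hy : π i with u | ⟨u, t⟩
  · rw [hy, hx] at he
    exact he.elim
  · have hu : u = v := by
      have := edge_inr_base (hy ▸ he)
      rw [hx] at this
      exact this.symm
    subst hu
    have hsg := balanced_sign hπ hb i u hv
    have hm := hb i u t hv hy
    rw [hx, hy] at hs
    rw [hx] at hm
    rw [hy] at hsg
    fin_cases t <;> simp only [balance] at hm <;> split_ifs at hm <;>
          simp_all [mpOfParity] <;> omega

/-- At a vertex of priority at least `p`, a play that balances at priority `p` does not make a
nonnegative excess over `p` negative: a weight below `p` occurs only on the `-` loop of a gadget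
of priority `p`, where balancing requires positive excess. -/
lemma balanced_nonneg_step (hπ : (mpOfParity G Ω).IsPlay π) {p : ℕ} (hb : PlayBalanced G Ω π p)
    (i : ℕ) (hp : p ≤ Ω (gBase (π i))) (h : 0 ≤ excess G Ω π p i) :
    0 ≤ excess G Ω π p (i + 1) := by
  have he := hπ.2 i
  have hs := excess_succ (G := G) (Ω := Ω) (π := π) p i
  rcases hx : π i with u | ⟨u, t⟩
  · rw [hx] at hp hs
    simp only [gBase, mpOfParity, Sum.elim_inl, id] at hp hs
    omega
  · rw [hx] at hp
    simp only [gBase, Sum.elim_inr] at hp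
    by_cases hup : Ω u = p
    · have hm := hb i u t hup hx
      have hsg := balanced_sign hπ hb i u hup
      rw [hm, hx] at hs
      rw [hx] at hsg
      fin_cases t <;> simp only [balance] at hs <;> split_ifs at hs <;>
          simp_all [mpOfParity] <;> omega
    · have hw : (p : ℤ) ≤ (mpOfParity G Ω).w (π i) (π (i + 1)) := by
        rw [hx]
        rcases π (i + 1) with y | ⟨y, s⟩
        · simp only [mpOfParity]; omega
        · simp only [mpOfParity]; split_ifs <;> omega
      omega

/-- The value of a play that traces `ρ` and balances at the least priority `p` seen infinitely
often along `ρ` is exactly `p`. -/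
lemma MP_of_balanced (hπ : (mpOfParity G Ω).IsPlay π) (htr : Traces π ρ)
    (hinf : {i | (π i).isLeft = true}.Infinite) {p : ℕ}
    (hio : ∀ N, ∃ k, N ≤ k ∧ Ω (ρ k) = p)
    (hmin : ∀ q, (∀ N, ∃ k, N ≤ k ∧ Ω (ρ k) = q) → p ≤ q)
    (hb : PlayBalanced G Ω π p) : (mpOfParity G Ω).MP π = p := by
  have hev : ∀ᶠ k in atTop, p ≤ Ω (ρ k) := by
    have : ∀ᶠ k in atTop, ∀ q ∈ Finset.range p, Ω (ρ k) ≠ q := by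
      rw [Filter.eventually_all_finset]
      intro q hq
      by_contra hcon
      have h2 : ∃ᶠ k in atTop, Ω (ρ k) = q := by
        simpa [Filter.Frequently] using hcon
      rw [frequently_atTop] at h2
      have := hmin q h2
      simp at hq; omega
    filter_upwards [this] with k hk
    by_contra hlt
    exact hk _ (Finset.mem_range.2 (not_le.1 hlt)) rfl
  obtain ⟨K, hK⟩ := eventually_atTop.1 hev
  set t : ℕ → ℕ := Nat.nth (fun i => (π i).isLeft = true) with ht
  have hcnt : ∀ j, gCount π (t j) = j := fun j => Nat.count_nth_of_infinite hinf j
  have hbig : ∀ i ≥ t K, p ≤ Ω (gBase (π i)) := by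
    intro i hi
    rw [htr i]
    apply hK
    have := Nat.count_monotone (fun i => (π i).isLeft = true) hi
    change gCount π (t K) ≤ gCount π i at this
    rwa [hcnt] at this
  have hzero : ∀ M, ∃ i ≥ M, excess G Ω π p i = 0 := by
    intro M
    obtain ⟨k, hk, hkp⟩ := hio (M + 1)
    have hge : k ≤ t k := (Nat.nth_strictMono hinf).le_apply
    have hl : (π (t k)).isLeft = true := Nat.nth_mem_of_infinite hinf k
    obtain ⟨v, hv⟩ := Sum.isLeft_iff.1 hl
    have hvk : v = ρ k := by
      have := htr (t k)
      rw [hcnt, hv] at this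
      exact this
    exact ⟨t k, by omega, balanced_exit hπ hb _ (by omega) v (by rw [hvk, hkp]) hv⟩
  obtain ⟨i₀, hi₀, hz⟩ := hzero (t K)
  refine MP_of_excess (N := i₀) ?_ hzero
  intro i hi
  induction i, hi using Nat.le_induction with
  | base => omega
  | succ i hi ih => exact balanced_nonneg_step hπ hb i (hbig i (by omega)) ih

/-! ### Plays that stay in a gadget for ever -/

lemma eventually_loop (hπ : (mpOfParity G Ω).IsPlay π)
    (hfin : ¬ {i | (π i).isLeft = true}.Infinite) :
    ∃ v t N, (t = 1 ∨ t = 2) ∧ ∀ i ≥ N, π i = Sum.inr (v, t) := by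
  rw [Set.not_infinite] at hfin
  obtain ⟨N, hN⟩ := hfin.bddAbove
  have hno : ∀ i > N, ∀ u, π i ≠ Sum.inl u := by
    intro i hi u hu
    have : i ≤ N := hN (by simp [hu])
    omega
  have stay : ∀ v, ∀ t : Fin 3, (t = 1 ∨ t = 2) → ∀ M > N, π M = Sum.inr (v, t) →
      ∀ i ≥ M, π i = Sum.inr (v, t) := by
    intro v t ht M hM hx i hi
    induction i, hi using Nat.le_induction with
    | base => exact hx
    | succ i hi ih =>
      have he := hπ.2 i
      rw [ih] at he
      rcases ht with rfl | rfl
      · exact (edge_one he).resolve_right (hno _ (by omega) _)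
      · exact (edge_two he).resolve_right (hno _ (by omega) _)
  rcases hx : π (N + 1) with u | ⟨v, t⟩
  · exact absurd hx (hno _ (by omega) u)
  · have he := hπ.2 (N + 1)
    rw [hx] at he
    fin_cases t
    · rcases edge_zero he with h | h
      · exact ⟨v, 1, N + 2, Or.inl rfl, stay v 1 (Or.inl rfl) _ (by omega) h⟩
      · exact ⟨v, 2, N + 2, Or.inr rfl, stay v 2 (Or.inr rfl) _ (by omega) h⟩
    · exact ⟨v, 1, N + 1, Or.inl rfl, stay v 1 (Or.inl rfl) _ (by omega) hx⟩
    · exact ⟨v, 2, N + 1, Or.inr rfl, stay v 2 (Or.inr rfl) _ (by omega) hx⟩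

lemma MP_of_loop {v : V} {t : Fin 3} {N : ℕ} (ht : t = 1 ∨ t = 2)
    (h : ∀ i ≥ N, π i = Sum.inr (v, t)) :
    (mpOfParity G Ω).MP π = (Ω v : ℝ) + 1 ∨ (mpOfParity G Ω).MP π = (Ω v : ℝ) - 1 := by
  rcases ht with rfl | rfl
  · left
    rw [MP_of_const (N := N) (c := (Ω v : ℤ) + 1)]
    · push_cast; rfl
    · intro i hi
      rw [h i hi, h (i + 1) (by omega)]
      simp [mpOfParity]
  · right
    rw [MP_of_const (N := N) (c := (Ω v : ℤ) - 1)]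
    · push_cast; rfl
    · intro i hi
      rw [h i hi, h (i + 1) (by omega)]
      simp [mpOfParity]

/-- Balancing always leaves the gadget, since each loop brings the excess closer to zero. -/
lemma not_loop_of_balanced {v : V} {t : Fin 3} {N : ℕ} (ht : t = 1 ∨ t = 2)
    (h : ∀ i ≥ N, π i = Sum.inr (v, t)) (hb : PlayBalanced G Ω π (Ω v)) : False := by
  set D := excess G Ω π (Ω v)
  rcases ht with rfl | rfl
  · have h1 : ∀ i ≥ N, D i < 0 := by
      intro i hi
      have := hb i v 1 rfl (h i hi)
      rw [h (i + 1) (by omega)] at this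
      by_contra hc
      simp [balance, D, hc] at this
    have h2 : ∀ k : ℕ, D (N + k) = D N + k := by
      intro k
      induction k with
      | zero => simp
      | succ k ih =>
        have hs := excess_succ (G := G) (Ω := Ω) (π := π) (Ω v) (N + k)
        rw [h (N + k) (by omega), h (N + k + 1) (by omega)] at hs
        simp [mpOfParity] at hs
        change D (N + k + 1) = D (N + k) + _ - _ at hs
        rw [← add_assoc, hs, ih]; push_cast; ring
    have h3 := h1 (N + (D N).natAbs) (by omega)
    rw [h2] at h3
    have := h1 N le_rfl
    omega
  · have h1 : ∀ i ≥ N, 0 < D i := by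
      intro i hi
      have := hb i v 2 rfl (h i hi)
      rw [h (i + 1) (by omega)] at this
      by_contra hc
      simp [balance, D, hc] at this
    have h2 : ∀ k : ℕ, D (N + k) = D N - k := by
      intro k
      induction k with
      | zero => simp
      | succ k ih =>
        have hs := excess_succ (G := G) (Ω := Ω) (π := π) (Ω v) (N + k)
        rw [h (N + k) (by omega), h (N + k + 1) (by omega)] at hs
        simp [mpOfParity] at hs
        change D (N + k + 1) = D (N + k) + _ - _ at hs
        rw [← add_assoc, hs, ih]; push_cast; ring
    have h3 := h1 (N + (D N).natAbs) (by omega)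
    rw [h2] at h3
    have := h1 N le_rfl
    omega

end Basic

/-! ### From the parity game to the mean-payoff game -/

section Forward

variable {G : GameGraph V} {Ω : V → ℕ} {π : ℕ → V ⊕ V × Fin 3} {ρ : ℕ → V}

/-- Eve's strategy in the gadget game obtained from a strategy `σ` of the parity game: follow
`σ` on the original vertices visited so far, and balance inside the gadgets. -/
def liftStrategy (G : GameGraph V) (Ω : V → ℕ) (σ : List V → V)
    (h : List (V ⊕ V × Fin 3)) : V ⊕ V × Fin 3 :=
  match h.getLastD (Sum.inl G.init) with
  | Sum.inl _ => Sum.inr (σ (h.filterMap Sum.getLeft?), 0)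
  | Sum.inr (v, t) => balance (listExcess G Ω h (Ω v)) v t

lemma liftStrategy_inl (σ : List V → V) (l : List (V ⊕ V × Fin 3)) (v : V) :
    liftStrategy G Ω σ (l ++ [Sum.inl v]) =
      Sum.inr (σ ((l ++ [Sum.inl v]).filterMap Sum.getLeft?), 0) := by
  simp [liftStrategy]

lemma liftStrategy_inr (σ : List V → V) (l : List (V ⊕ V × Fin 3)) (v : V) (t : Fin 3) :
    liftStrategy G Ω σ (l ++ [Sum.inr (v, t)]) =
      balance (listExcess G Ω (l ++ [Sum.inr (v, t)]) (Ω v)) v t := by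
  simp [liftStrategy]

lemma liftStrategy_legal {σ : List V → V} (hσ : G.EveLegal σ) :
    (mpOfParity G Ω).EveLegal (liftStrategy G Ω σ) := by
  rintro l (v | ⟨v, t⟩) hv
  · rw [liftStrategy_inl]
    refine ⟨?_, rfl⟩
    rw [List.filterMap_append]
    exact hσ _ v (inl_mem_eve.1 hv)
  · rw [liftStrategy_inr]
    exact balance_edge _ v t

lemma liftStrategy_balanced {σ : List V → V}
    (hc : (mpOfParity G Ω).ConsEve (liftStrategy G Ω σ) π) {p : ℕ} (hp : Even p) :
    PlayBalanced G Ω π p := by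
  intro i v t hv hx
  have h := hc i (by rw [hx, inr_mem_eve, hv]; exact hp)
  obtain ⟨l, hl⟩ := prefixList_concat π i
  rw [hx] at hl
  rw [h, hl, liftStrategy_inr, ← hl, listExcess_prefix, hv]

/-- A play that visits original vertices infinitely often traces its sequence of original
vertices. -/
lemma exists_traces (hπ : (mpOfParity G Ω).IsPlay π)
    (hinf : {i | (π i).isLeft = true}.Infinite) : ∃ ρ, Traces π ρ := by
  refine ⟨fun j => gBase (π (Nat.nth (fun i => (π i).isLeft = true) j)), fun i => ?_⟩
  beta_reduce
  have hle : i ≤ Nat.nth (fun i => (π i).isLeft = true) (gCount π i) :=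
    Nat.le_nth_count hinf i
  have hlt : ∀ k < Nat.nth (fun i => (π i).isLeft = true) (gCount π i), i ≤ k →
      ¬ (π k).isLeft = true := by
    intro k hk hik hl
    have h1 : gCount π i ≤ gCount π k := Nat.count_monotone _ hik
    have h2 := Nat.nth_count (p := fun i => (π i).isLeft = true) hl
    have h3 := (Nat.nth_strictMono hinf).monotone h1
    change Nat.nth _ (gCount π k) = k at h2
    omega
  generalize Nat.nth (fun i => (π i).isLeft = true) (gCount π i) = m at hle hlt ⊢
  induction m, hle using Nat.le_induction with
  | base => rfl
  | succ m hm ih =>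
    rw [ih (fun k hk => hlt k (by omega))]
    have hr := hlt m (by omega) hm
    have he := hπ.2 m
    rcases hx : π m with u | ⟨u, t⟩
    · simp [hx] at hr
    · rw [hx] at he
      rw [edge_inr_base he]
      rfl

lemma filterMap_prefix (htr : Traces π ρ) (i : ℕ) :
    (prefixList π i).filterMap Sum.getLeft? = (List.range (gCount π (i + 1))).map ρ := by
  have key : ∀ i, ((List.range i).map π).filterMap Sum.getLeft?
      = (List.range (gCount π i)).map ρ := by
    intro i
    induction i with
    | zero => simp [gCount]
    | succ i ih =>
      rw [List.range_succ, List.map_append, List.filterMap_append, ih]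
      rcases hx : π i with u | ⟨u, t⟩
      · rw [gCount_succ_inl hx, List.range_succ, List.map_append]
        have := htr i
        rw [hx] at this
        simp [hx, ← this, gBase]
      · rw [gCount_succ_inr hx]
        simp [hx]
  rw [prefixList_eq, key]

/-- The traced sequence is a play of the parity game, consistent with the strategy that was
lifted. -/
lemma traces_play (hπ : (mpOfParity G Ω).IsPlay π)
    (hinf : {i | (π i).isLeft = true}.Infinite) (htr : Traces π ρ) {σ : List V → V}
    (hc : (mpOfParity G Ω).ConsEve (liftStrategy G Ω σ) π) :
    G.IsPlay ρ ∧ G.ConsEve σ ρ := by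
  have step : ∀ j, ∃ i, gCount π i = j ∧ π i = Sum.inl (ρ j) ∧
      π (i + 1) = Sum.inr (ρ (j + 1), 0) ∧ G.E (ρ j) (ρ (j + 1)) := by
    intro j
    set i := Nat.nth (fun i => (π i).isLeft = true) j with hi
    have hcnt : gCount π i = j := Nat.count_nth_of_infinite hinf j
    have hl : (π i).isLeft = true := Nat.nth_mem_of_infinite hinf j
    obtain ⟨v, hv⟩ := Sum.isLeft_iff.1 hl
    have hvj := htr i
    rw [hcnt, hv] at hvj
    change v = ρ j at hvj
    subst hvj
    have he := hπ.2 i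
    rw [hv] at he
    obtain ⟨u, hu, hy⟩ := edge_inl he
    have huj := htr (i + 1)
    rw [gCount_succ_inl hv, hcnt, hy] at huj
    change u = ρ (j + 1) at huj
    subst huj
    exact ⟨i, hcnt, hv, hy, hu⟩
  refine ⟨⟨?_, fun j => ?_⟩, fun j hj => ?_⟩
  · have h0 : π 0 = Sum.inl G.init := hπ.1
    have := htr 0
    rw [h0] at this
    simpa [gCount, gBase] using this.symm
  · obtain ⟨i, -, -, -, h⟩ := step j
    exact h
  · obtain ⟨i, hcnt, hx, hy, -⟩ := step j
    have h := hc i (by rw [hx]; exact inl_mem_eve.2 hj)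
    obtain ⟨l, hl⟩ := prefixList_concat π i
    rw [hx] at hl
    rw [hy, hl, liftStrategy_inl, ← hl, filterMap_prefix htr, gCount_succ_inl hx, hcnt,
      ← prefixList_eq] at h
    simpa using h

end Forward

/-! ### From the mean-payoff game to the parity game -/

section Backward

variable {G : GameGraph V} {Ω : V → ℕ} {τ : List (V ⊕ V × Fin 3) → V ⊕ V × Fin 3}
  {ρ : ℕ → V}

/-- One step of the simulation of `ρ` in the gadget game: original vertices move on to the next
entry of `ρ`, gadgets of even priority follow `τ`, and gadgets of odd priority balance. -/
def simNext (G : GameGraph V) (Ω : V → ℕ) (τ : List (V ⊕ V × Fin 3) → V ⊕ V × Fin 3)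
    (ρ : ℕ → V) (h : List (V ⊕ V × Fin 3)) : V ⊕ V × Fin 3 :=
  open Classical in
  match h.getLastD (Sum.inl G.init) with
  | Sum.inl _ => Sum.inr (ρ (h.countP Sum.isLeft), 0)
  | Sum.inr (v, t) => if Even (Ω v) then τ h else balance (listExcess G Ω h (Ω v)) v t

/-- The history of the simulation of `ρ` after `i` steps. -/
def simHist (G : GameGraph V) (Ω : V → ℕ) (τ : List (V ⊕ V × Fin 3) → V ⊕ V × Fin 3)
    (ρ : ℕ → V) : ℕ → List (V ⊕ V × Fin 3)
  | 0 => [Sum.inl (ρ 0)]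
  | i + 1 => simHist G Ω τ ρ i ++ [simNext G Ω τ ρ (simHist G Ω τ ρ i)]

/-- The play of the gadget game simulating `ρ`. -/
def sim (G : GameGraph V) (Ω : V → ℕ) (τ : List (V ⊕ V × Fin 3) → V ⊕ V × Fin 3)
    (ρ : ℕ → V) (i : ℕ) : V ⊕ V × Fin 3 :=
  (simHist G Ω τ ρ i).getLastD (Sum.inl G.init)

lemma simHist_eq (ρ : ℕ → V) (i : ℕ) : simHist G Ω τ ρ i = prefixList (sim G Ω τ ρ) i := by
  induction i with
  | zero => simp [prefixList, sim, simHist]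
  | succ i ih =>
    rw [prefixList_succ, ← ih]
    simp [sim, simHist]

lemma sim_succ (ρ : ℕ → V) (i : ℕ) :
    sim G Ω τ ρ (i + 1) = simNext G Ω τ ρ (prefixList (sim G Ω τ ρ) i) := by
  rw [← simHist_eq]
  simp [sim, simHist]

lemma prefixList_getLastD {α : Type} (π : ℕ → α) (i : ℕ) (a : α) :
    (prefixList π i).getLastD a = π i := by
  obtain ⟨l, hl⟩ := prefixList_concat π i
  rw [hl]
  simp

lemma prefixList_countP (π : ℕ → V ⊕ V × Fin 3) (i : ℕ) :
    (prefixList π i).countP Sum.isLeft = gCount π (i + 1) := by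
  rw [prefixList_eq, gCount]
  generalize i + 1 = m
  induction m with
  | zero => simp
  | succ m ih =>
    rw [List.range_succ, List.map_append, List.countP_append, ih, Nat.count_succ]
    simp [List.countP_cons]

lemma sim_succ_inl {i : ℕ} {v : V} (h : sim G Ω τ ρ i = Sum.inl v) :
    sim G Ω τ ρ (i + 1) = Sum.inr (ρ (gCount (sim G Ω τ ρ) i + 1), 0) := by
  rw [sim_succ, simNext, prefixList_getLastD, h, prefixList_countP, gCount_succ_inl h]

lemma sim_succ_even {i : ℕ} {v : V} {t : Fin 3} (h : sim G Ω τ ρ i = Sum.inr (v, t))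
    (hv : Even (Ω v)) : sim G Ω τ ρ (i + 1) = τ (prefixList (sim G Ω τ ρ) i) := by
  rw [sim_succ, simNext, prefixList_getLastD, h]
  simp [hv]

lemma sim_succ_odd {i : ℕ} {v : V} {t : Fin 3} (h : sim G Ω τ ρ i = Sum.inr (v, t))
    (hv : ¬ Even (Ω v)) :
    sim G Ω τ ρ (i + 1) = balance (excess G Ω (sim G Ω τ ρ) (Ω v) i) v t := by
  rw [sim_succ, simNext, prefixList_getLastD, h]
  simp [hv, listExcess_prefix]

lemma sim_balanced {p : ℕ} (hp : ¬ Even p) : PlayBalanced G Ω (sim G Ω τ ρ) p := by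
  intro i v t hv hx
  subst hv
  exact sim_succ_odd hx hp

/-- The simulation up to the visit number `m` of an original vertex depends only on the entries
of `ρ` up to index `m`. -/
lemma simHist_congr {ρ' : ℕ → V} {m : ℕ} (h : ∀ j ≤ m, ρ j = ρ' j) (i : ℕ)
    (hi : gCount (sim G Ω τ ρ) i ≤ m) : simHist G Ω τ ρ i = simHist G Ω τ ρ' i := by
  induction i with
  | zero => simp [simHist, h 0 (Nat.zero_le _)]
  | succ i ih =>
    have hmono : gCount (sim G Ω τ ρ) i ≤ gCount (sim G Ω τ ρ) (i + 1) :=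
      Nat.count_monotone _ (Nat.le_succ i)
    have ih := ih (by omega)
    rw [simHist, simHist, ← ih]
    congr 2
    have hc := prefixList_countP (sim G Ω τ ρ) i
    rw [← simHist_eq] at hc
    simp only [simNext, hc, h _ hi]

/-- Eve's strategy in the parity game obtained from `τ`: run the simulation on the given
history up to the visit of its last vertex, and take the vertex that `τ` proposes there. The
history is padded to an infinite sequence, and an arbitrary successor replaces an illegal
proposal; neither matters along plays consistent with the strategy. -/
noncomputable def projStrategy (G : GameGraph V) (Ω : V → ℕ)
    (τ : List (V ⊕ V × Fin 3) → V ⊕ V × Fin 3) (l : List V) : V :=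
  open Classical in
  let π := sim G Ω τ (fun j => l.getD j G.init)
  let u := gBase (τ (prefixList π (Nat.nth (fun i => (π i).isLeft = true) (l.length - 1))))
  if G.E (l.getLastD G.init) u then u else (G.succ (l.getLastD G.init)).choose

lemma projStrategy_legal : G.EveLegal (projStrategy G Ω τ) := by
  intro l v _
  have hl : (l ++ [v]).getLastD G.init = v := by simp
  simp only [projStrategy]
  split_ifs with h
  · rwa [hl] at h
  · have := (G.succ ((l ++ [v]).getLastD G.init)).choose_spec
    generalize (G.succ ((l ++ [v]).getLastD G.init)).choose = y at this ⊢
    rwa [hl] at this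

lemma projStrategy_prefix (hτ : (mpOfParity G Ω).EveLegal τ) {i : ℕ} {v : V} (hv : v ∈ G.Eve)
    (hx : sim G Ω τ ρ i = Sum.inl v) (hvρ : v = ρ (gCount (sim G Ω τ ρ) i)) :
    τ (prefixList (sim G Ω τ ρ) i) =
      Sum.inr (projStrategy G Ω τ (prefixList ρ (gCount (sim G Ω τ ρ) i)), 0) := by
  set m := gCount (sim G Ω τ ρ) i with hm
  set ρ' : ℕ → V := fun j => (prefixList ρ m).getD j G.init with hρ'
  have hagree : ∀ j ≤ m, ρ j = ρ' j := fun j hj => (prefixList_getD ρ m j _ hj).symm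
  have hsim : ∀ j ≤ i, sim G Ω τ ρ j = sim G Ω τ ρ' j := by
    intro j hj
    have : gCount (sim G Ω τ ρ) j ≤ m := Nat.count_monotone _ hj
    rw [sim, simHist_congr hagree j this, sim]
  have hpre : prefixList (sim G Ω τ ρ') i = prefixList (sim G Ω τ ρ) i := by
    rw [← simHist_eq, ← simHist_eq, simHist_congr hagree i le_rfl]
  have hcount : gCount (sim G Ω τ ρ') i = m := by
    rw [hm, gCount, gCount, Nat.count_eq_card_filter_range, Nat.count_eq_card_filter_range]
    congr 1
    apply Finset.filter_congr
    intro j hj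
    rw [hsim j (Finset.mem_range.1 hj).le]
  have hnth : Nat.nth (fun j => (sim G Ω τ ρ' j).isLeft = true) m = i := by
    rw [← hcount]
    apply Nat.nth_count
    rw [← hsim i le_rfl, hx]
    rfl
  have hlen : (prefixList ρ m).length - 1 = m := by simp [prefixList]
  have hlast : (prefixList ρ m).getLastD G.init = v := by rw [prefixList_getLastD, hvρ]
  obtain ⟨l, hl⟩ := prefixList_concat (sim G Ω τ ρ) i
  rw [hx] at hl
  have hleg := hτ l (Sum.inl v) (inl_mem_eve.2 hv)
  rw [← hl] at hleg
  obtain ⟨u, hu, hy⟩ := edge_inl hleg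
  have hps : projStrategy G Ω τ (prefixList ρ m) = u := by
    simp only [projStrategy]
    rw [← hρ', hlen, hnth, hpre, hy]
    exact if_pos (by rw [hlast]; exact hu)
  rw [hy, hps]

lemma sim_play (hτ : (mpOfParity G Ω).EveLegal τ) (hρ : G.IsPlay ρ)
    (hc : G.ConsEve (projStrategy G Ω τ) ρ) :
    Traces (sim G Ω τ ρ) ρ ∧ (mpOfParity G Ω).IsPlay (sim G Ω τ ρ) ∧
      (mpOfParity G Ω).ConsEve τ (sim G Ω τ ρ) := by
  set π := sim G Ω τ ρ with hπ
  have hinl : ∀ i v, π i = Sum.inl v → π (i + 1) = Sum.inr (ρ (gCount π i + 1), 0) :=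
    fun i v h => sim_succ_inl h
  have heven : ∀ i v t, π i = Sum.inr (v, t) → Even (Ω v) → π (i + 1) = τ (prefixList π i) :=
    fun i v t h => sim_succ_even h
  have hodd : ∀ i v t, π i = Sum.inr (v, t) → ¬ Even (Ω v) →
      π (i + 1) = balance (excess G Ω π (Ω v) i) v t :=
    fun i v t h => sim_succ_odd h
  have hinr : ∀ i v t, π i = Sum.inr (v, t) →
      (mpOfParity G Ω).E (Sum.inr (v, t)) (π (i + 1)) := by
    intro i v t hx
    by_cases hv : Even (Ω v)
    · rw [heven i v t hx hv]
      obtain ⟨l, hl⟩ := prefixList_concat π i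
      rw [hx] at hl
      rw [hl]
      exact hτ l _ (inr_mem_eve.2 hv)
    · rw [hodd i v t hx hv]
      exact balance_edge _ _ _
  have htr : Traces π ρ := by
    intro i
    induction i with
    | zero => simp [hπ, sim, simHist, gCount, gBase]
    | succ i ih =>
      rcases hx : π i with u | ⟨u, t⟩
      · rw [gCount_succ_inl hx, hinl i u hx]
        rfl
      · rw [gCount_succ_inr hx, ← ih, hx, edge_inr_base (hinr i u t hx)]
        rfl
  refine ⟨htr, ⟨?_, fun i => ?_⟩, fun i hi => ?_⟩
  · have : π 0 = Sum.inl (ρ 0) := by simp [hπ, sim, simHist]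
    rw [this, hρ.1]
    rfl
  · rcases hx : π i with u | ⟨u, t⟩
    · rw [hinl i u hx]
      have := htr i
      rw [hx] at this
      change u = _ at this
      rw [this]
      exact ⟨hρ.2 _, rfl⟩
    · exact hinr i u t hx
  · rcases hx : π i with u | ⟨u, t⟩
    · have hu := htr i
      rw [hx] at hu
      change u = _ at hu
      rw [hx] at hi
      have hu' := inl_mem_eve.1 hi
      rw [projStrategy_prefix hτ hu' hx hu, hinl i u hx, hc _ (hu ▸ hu')]
    · rw [hx] at hi
      exact heven i u t hx (inr_mem_eve.1 hi)

lemma exists_min_priority {N : ℕ} (hΩ : ∀ v, Ω v ≤ N) (ρ : ℕ → V) :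
    ∃ p, (∀ N, ∃ k, N ≤ k ∧ Ω (ρ k) = p) ∧
      ∀ q, (∀ N, ∃ k, N ≤ k ∧ Ω (ρ k) = q) → p ≤ q := by
  classical
  have hex : ∃ p, ∀ N, ∃ k, N ≤ k ∧ Ω (ρ k) = p := by
    by_contra hcon
    have h1 : ∀ q ∈ Finset.range (N + 1), ∀ᶠ k in atTop, Ω (ρ k) ≠ q := by
      intro q _
      by_contra hq
      have h2 : ∃ᶠ k in atTop, Ω (ρ k) = q := by simpa [Filter.Frequently] using hq
      exact hcon ⟨q, frequently_atTop.1 h2⟩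
    obtain ⟨k, hk⟩ := ((Filter.eventually_all_finset _).2 h1).exists
    exact hk _ (Finset.mem_range.2 (Nat.lt_succ_of_le (hΩ (ρ k)))) rfl
  exact ⟨Nat.find hex, Nat.find_spec hex, fun q hq => Nat.find_min' hex hq⟩

end Backward

/-! ### The interval set and the equivalence -/

/-- An integer belongs to `[0,1) ∪ [2,3) ∪ ⋯ ∪ [n, n+1)` iff it is even and lies in `[0, n]`. -/
lemma int_mem_intervals {n : ℕ} (hn : Even n) (z : ℤ) :
    (z : ℝ) ∈ (⋃ i ∈ Finset.range (n / 2 + 1),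
        Set.Ico ((2 * i : ℕ) : ℝ) (((2 * i : ℕ) : ℝ) + 1)) ↔ Even z ∧ 0 ≤ z ∧ z ≤ n := by
  simp only [Set.mem_iUnion, Finset.mem_range, Set.mem_Ico, exists_prop]
  constructor
  · rintro ⟨i, hi, h1, h2⟩
    have h1' : ((2 * i : ℕ) : ℤ) ≤ z := by exact_mod_cast h1
    have h2' : z < ((2 * i : ℕ) : ℤ) + 1 := by exact_mod_cast h2
    exact ⟨⟨i, by omega⟩, by omega, by omega⟩
  · rintro ⟨⟨r, hr⟩, h0, h1⟩
    obtain ⟨s, hs⟩ := hn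
    have hz : z = ((2 * r.toNat : ℕ) : ℤ) := by omega
    refine ⟨r.toNat, by omega, ?_, ?_⟩
    · exact_mod_cast hz.ge
    · exact_mod_cast (show z < ((2 * r.toNat : ℕ) : ℤ) + 1 by omega)

end Reduction

/-- Let `(G, Ω)` be a min-parity game with priorities in
`[0, |V|]` and let `n` be the smallest even integer with `n ≥ |V|`.  Eve wins the
parity game iff she wins the interval mean-payoff game of the gadget construction,
with `I = [0,1) ∪ [2,3) ∪ ⋯ ∪ [n, n+1)`. -/
theorem stmt7 {V : Type} [Fintype V] (G : GameGraph V) (Ω : V → ℕ)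
    (hΩ : ∀ v, Ω v ≤ Fintype.card V)
    (n : ℕ) (hn : Even n) (hn' : Fintype.card V ≤ n)
    (hnmin : ∀ m : ℕ, Even m → Fintype.card V ≤ m → n ≤ m)
    (I : Set ℝ)
    (hI : I = ⋃ i ∈ Finset.range (n / 2 + 1),
        Set.Ico ((2 * i : ℕ) : ℝ) (((2 * i : ℕ) : ℝ) + 1)) :
    G.EveWins (GameGraph.ParityWin Ω) ↔
      (mpOfParity G Ω).EveWins (fun π => (mpOfParity G Ω).MP π ∈ I) := by
  subst hI
  constructor
  · rintro ⟨σ, hσ, hwin⟩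
    refine ⟨liftStrategy G Ω σ, liftStrategy_legal hσ, fun π hπ hc => ?_⟩
    by_cases hinf : {i | (π i).isLeft = true}.Infinite
    · obtain ⟨ρ, htr⟩ := exists_traces hπ hinf
      obtain ⟨hρ, hρc⟩ := traces_play hπ hinf htr hc
      obtain ⟨p, hp, hio, hmin⟩ := hwin ρ hρ hρc
      have hMP := MP_of_balanced hπ htr hinf hio hmin (liftStrategy_balanced hc hp)
      obtain ⟨k, -, hk⟩ := hio 0
      have := hΩ (ρ k)
      have hmem := (int_mem_intervals hn (p : ℤ)).2
        ⟨by exact_mod_cast hp, by omega, by omega⟩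
      rw [hMP]
      exact_mod_cast hmem
    · obtain ⟨v, t, N, ht, hloop⟩ := eventually_loop hπ hinf
      by_cases hv : Even (Ω v)
      · exact (not_loop_of_balanced ht hloop (liftStrategy_balanced hc hv)).elim
      · have hle := hΩ v
        obtain ⟨r, hr⟩ := Nat.not_even_iff_odd.1 hv
        obtain ⟨s, hs⟩ := hn
        rcases MP_of_loop (G := G) (Ω := Ω) ht hloop with hMP | hMP
        · have hmem := (int_mem_intervals ⟨s, hs⟩ ((Ω v : ℤ) + 1)).2
            ⟨⟨r + 1, by omega⟩, by omega, by omega⟩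
          rw [hMP]
          exact_mod_cast hmem
        · have hmem := (int_mem_intervals ⟨s, hs⟩ ((Ω v : ℤ) - 1)).2
            ⟨⟨r, by omega⟩, by omega, by omega⟩
          rw [hMP]
          exact_mod_cast hmem
  · rintro ⟨τ, hτ, hwin⟩
    refine ⟨projStrategy G Ω τ, projStrategy_legal, fun ρ hρ hc => ?_⟩
    obtain ⟨htr, hπ, hπc⟩ := sim_play hτ hρ hc
    have hmem := hwin _ hπ hπc
    beta_reduce at hmem
    by_cases hinf : {i | (sim G Ω τ ρ i).isLeft = true}.Infinite
    · obtain ⟨p, hio, hmin⟩ := exists_min_priority hΩ ρ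
      refine ⟨p, ?_, hio, hmin⟩
      by_contra hp
      rw [MP_of_balanced hπ htr hinf hio hmin (sim_balanced hp)] at hmem
      have := ((int_mem_intervals hn (p : ℤ)).1 (by exact_mod_cast hmem)).1
      exact hp (by exact_mod_cast this)
    · exfalso
      obtain ⟨v, t, N, ht, hloop⟩ := eventually_loop hπ hinf
      by_cases hv : Even (Ω v)
      · obtain ⟨r, hr⟩ := hv
        rcases MP_of_loop (G := G) (Ω := Ω) ht hloop with hMP | hMP
        · rw [hMP] at hmem
          obtain ⟨⟨s, hs⟩, -⟩ := (int_mem_intervals hn ((Ω v : ℤ) + 1)).1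
            (by exact_mod_cast hmem)
          omega
        · rw [hMP] at hmem
          obtain ⟨⟨s, hs⟩, -⟩ := (int_mem_intervals hn ((Ω v : ℤ) - 1)).1
            (by exact_mod_cast hmem)
          omega
      · exact not_loop_of_balanced ht hloop (sim_balanced hv)
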